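/- arXiv:1409.1097 — 5 statements merged into one kernel-verified Lean document; each statement's English description precedes it below -/
import Mathlib

section
/- Let N ≥ 2 and let k_1, …, k_N be as in the context. Then ρ ≥ 3, unless N = 2 and (k_1, k_2) = (2, 3), in which case ρ = 1. -/
/-! Each `Mᵢ = M / kᵢ` is at most `M / 2`, so `2ρ ≥ (N - 2) M`; since `M ≥ 2 ^ N`, this gives
`ρ ≥ 4` as soon as `N ≥ 3`. For two multiplicities `ρ + 1 = (k₁ - 1) (k₂ - 1)`, which is at least
`4` except for the pairs `(2, 2)`, `(2, 3)` and `(2, 4)`, of which only `(2, 3)` is coprime. -/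

/-- The coefficient `ρ` of the canonical divisor `K_S = ρλ` of the elliptic surface whose multiple
fibers have the multiplicities listed in `m`. A multiset is used because `ρ` is symmetric in the
multiplicities; the division `m.prod / a` is exact because `a` is a nonzero factor. -/
def canonicalCoeff (m : Multiset ℕ) : ℤ :=
  ((m.card : ℤ) - 1) * (m.prod : ℤ) - (m.map fun a ↦ ((m.prod / a : ℕ) : ℤ)).sum

theorem canonicalCoeff_pair {a b : ℕ} (ha : 0 < a) (hb : 0 < b) :
    canonicalCoeff {a, b} = ((a : ℤ) - 1) * ((b : ℤ) - 1) - 1 := by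
  simp only [canonicalCoeff, Multiset.insert_eq_cons, Multiset.card_cons, Multiset.card_singleton,
    Multiset.prod_cons, Multiset.prod_singleton, Multiset.map_cons, Multiset.map_singleton,
    Multiset.sum_cons, Multiset.sum_singleton, Nat.mul_div_cancel_left b ha,
    Nat.mul_div_cancel a hb]
  push_cast
  ring

theorem card_sub_two_mul_prod_le_two_mul_canonicalCoeff {m : Multiset ℕ} (hm : ∀ a ∈ m, 1 < a) :
    ((m.card : ℤ) - 2) * m.prod ≤ 2 * canonicalCoeff m := by
  have two_mul_div_le : ∀ a ∈ m, 2 * ((m.prod / a : ℕ) : ℤ) ≤ m.prod := fun a ha ↦ by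
    exact_mod_cast (Nat.mul_le_mul_right _ (hm a ha)).trans (Nat.mul_div_le m.prod a)
  have two_mul_sum_le :
      2 * (m.map fun a ↦ ((m.prod / a : ℕ) : ℤ)).sum ≤ m.card * (m.prod : ℤ) := by
    rw [← Multiset.sum_map_mul_left, ← nsmul_eq_mul]
    simpa using Multiset.sum_le_card_nsmul (m.map fun a ↦ 2 * ((m.prod / a : ℕ) : ℤ)) m.prod
      (by simpa using two_mul_div_le)
  unfold canonicalCoeff
  linarith

theorem four_le_canonicalCoeff_of_three_le_card {m : Multiset ℕ} (hcard : 3 ≤ m.card)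
    (hm : ∀ a ∈ m, 1 < a) : 4 ≤ canonicalCoeff m := by
  have eight_le_prod : 8 ≤ m.prod := calc
    2 ^ 3 ≤ 2 ^ m.card := Nat.pow_le_pow_right two_pos hcard
    _ ≤ m.prod := Multiset.pow_card_le_prod hm
  have eight_le_two_mul : 8 ≤ 2 * canonicalCoeff m := calc
    (8 : ℤ) = 1 * 8 := by norm_num
    _ ≤ ((m.card : ℤ) - 2) * m.prod := by gcongr <;> lia
    _ ≤ 2 * canonicalCoeff m := card_sub_two_mul_prod_le_two_mul_canonicalCoeff hm
  lia

theorem pair_eq_of_canonicalCoeff_lt_three {a b : ℕ} (ha : 1 < a) (hb : 1 < b)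
    (h : canonicalCoeff {a, b} < 3) :
    ({a, b} : Multiset ℕ) = {2, 2} ∨ ({a, b} : Multiset ℕ) = {2, 3} ∨
      ({a, b} : Multiset ℕ) = {2, 4} := by
  rw [canonicalCoeff_pair (by lia) (by lia)] at h
  have ha4 : a ≤ 4 := by nlinarith
  have hb4 : b ≤ 4 := by nlinarith
  interval_cases a <;> interval_cases b <;> revert h <;> decide

theorem rho_ge_three_unless_two_three_general {m : Multiset ℕ} (hcard : 2 ≤ m.card)
    (hm : ∀ a ∈ m, 1 < a) (h22 : m ≠ {2, 2}) (h24 : m ≠ {2, 4}) :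
    (m ≠ {2, 3} → 3 ≤ canonicalCoeff m) ∧ (m = {2, 3} → canonicalCoeff m = 1) := by
  refine ⟨fun h23 ↦ ?_, fun h ↦ h ▸ canonicalCoeff_pair two_pos three_pos⟩
  obtain hcard | hcard := hcard.eq_or_lt
  · obtain ⟨a, b, rfl⟩ := Multiset.card_eq_two.1 hcard.symm
    by_contra! h
    have := pair_eq_of_canonicalCoeff_lt_three (hm a (by simp)) (hm b (by simp)) h
    tauto
  · linarith [four_le_canonicalCoeff_of_three_le_card hcard hm]

theorem canonicalCoeff_map_range (N : ℕ) (k : ℕ → ℕ) :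
    canonicalCoeff ((Multiset.range N).map k) =
      ((N : ℤ) - 1) * ((∏ i ∈ Finset.range N, k i : ℕ) : ℤ) -
        ∑ i ∈ Finset.range N, (((∏ j ∈ Finset.range N, k j) / k i : ℕ) : ℤ) := by
  simp only [canonicalCoeff, Multiset.card_map, Multiset.card_range, Multiset.map_map]
  rfl

theorem map_range_eq_pair_iff {α : Type*} {N : ℕ} {k : ℕ → α} {a b : α} :
    (Multiset.range N).map k = {a, b} ↔
      N = 2 ∧ (k 0 = a ∧ k 1 = b ∨ k 0 = b ∧ k 1 = a) := by
  have pair_iff : (Multiset.range 2).map k = {a, b} ↔ k 0 = a ∧ k 1 = b ∨ k 0 = b ∧ k 1 = a :=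
    calc (Multiset.range 2).map k = {a, b}
      _ ↔ List.Perm [k 0, k 1] [a, b] := Multiset.coe_eq_coe
      _ ↔ k 0 = a ∧ k 1 = b ∨ k 0 = b ∧ k 1 = a := by simp [List.perm_pair]
  constructor
  · intro h
    obtain rfl : N = 2 := by simpa using congrArg Multiset.card h
    exact ⟨rfl, pair_iff.1 h⟩
  · rintro ⟨rfl, h⟩
    exact pair_iff.2 h

theorem map_range_eq_pair_iff_of_le {α : Type*} [Preorder α] {N : ℕ} {k : ℕ → α} {a b : α}
    (hmono : ∀ i j, i < j → j < N → k i < k j) (hab : a ≤ b) :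
    (Multiset.range N).map k = {a, b} ↔ N = 2 ∧ k 0 = a ∧ k 1 = b := by
  rw [map_range_eq_pair_iff, and_congr_right_iff]
  rintro rfl
  refine or_iff_left ?_
  rintro ⟨rfl, rfl⟩
  exact (hmono 0 1 one_pos one_lt_two).not_ge hab

theorem coprime_of_map_range_eq_pair {N a b : ℕ} {k : ℕ → ℕ}
    (hcop : ∀ i j, i < j → j < N → (k i).Coprime (k j))
    (h : (Multiset.range N).map k = {a, b}) : a.Coprime b := by
  obtain ⟨rfl, ⟨rfl, rfl⟩ | ⟨rfl, rfl⟩⟩ := map_range_eq_pair_iff.1 h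
  exacts [hcop 0 1 one_pos one_lt_two, (hcop 0 1 one_pos one_lt_two).symm]

/-- Proposition 3.1(1): for pairwise coprime multiplicities `1 < k 0 < k 1 < ⋯ < k (N-1)`
(with `N ≥ 2`), setting `M = ∏ kᵢ` and `ρ = (N-1)·M - ∑ M/kᵢ`, one has `ρ ≥ 3`
unless `N = 2` and `(k 0, k 1) = (2, 3)`, in which case `ρ = 1`. -/
theorem rho_ge_three_unless_two_three
    (N : ℕ) (hN : 2 ≤ N) (k : ℕ → ℕ)
    (hk : ∀ i < N, 1 < k i)
    (hmono : ∀ i j, i < j → j < N → k i < k j)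
    (hcop : ∀ i j, i < j → j < N → Nat.Coprime (k i) (k j))
    (M : ℕ) (hM : M = ∏ i ∈ Finset.range N, k i)
    (ρ : ℤ)
    (hρ : ρ = ((N : ℤ) - 1) * (M : ℤ) - ∑ i ∈ Finset.range N, ((M / k i : ℕ) : ℤ)) :
    (¬(N = 2 ∧ k 0 = 2 ∧ k 1 = 3) → 3 ≤ ρ) ∧
    ((N = 2 ∧ k 0 = 2 ∧ k 1 = 3) → ρ = 1) := by
  subst hM hρ
  rw [← map_range_eq_pair_iff_of_le hmono (by norm_num), ← canonicalCoeff_map_range]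
  exact rho_ge_three_unless_two_three_general (by simpa) (by simpa)
    (fun h ↦ absurd (coprime_of_map_range_eq_pair hcop h) (by decide))
    (fun h ↦ absurd (coprime_of_map_range_eq_pair hcop h) (by decide))
end

section
/- Let N ≥ 3 and let k_1, …, k_N be as in the context. If it is not the case that N = 3 and (k_1, k_2, k_3) = (2, 3, 5), then (N−2)·M > M_1 + ⋯ + M_N (equivalently, ρ > M). Moreover, in the exceptional case N = 3, (k_1, k_2, k_3) = (2, 3, 5), one has ρ = 29. -/
/-!
Dividing by `M` turns the inequality into `∑ 1 / kᵢ < N - 2`. For `N ≥ 4` the left side is less than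
`N / 2 ≤ N - 2` as soon as some `kᵢ` is not `2`, so coprimality only matters for `N = 3`. There the
sorted triple `(a, b, c)` dominates `(3, 4, 5)`, `(2, 5, 6)` or `(2, 3, 7)` termwise unless it is
`(2, 3, 5)`, because `b` and `c` are odd when `a = 2`; each of these three triples has reciprocal
sum less than `1`.
-/

open Finset Function

section LinearOrder

variable {α : Type*} [LinearOrder α]

lemma exists_lt_lt_eq_triple_of_card_eq_three {u : Finset α} (hu : #u = 3) :
    ∃ a b c, a < b ∧ b < c ∧ u = {a, b, c} := by
  let e := u.orderEmbOfFin hu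
  refine ⟨e 0, e 1, e 2, e.strictMono (by decide), e.strictMono (by decide), ?_⟩
  calc u = univ.image e := (u.image_orderEmbOfFin_univ hu).symm
    _ = {e 0, e 1, e 2} := by simp [Fin.univ_succ]

lemma triple_eq_triple_iff_of_lt {a b c a' b' c' : α} (hab : a < b) (hbc : b < c)
    (hab' : a' < b') (hbc' : b' < c') :
    ({a, b, c} : Finset α) = {a', b', c'} ↔ a = a' ∧ b = b' ∧ c = c' := by
  refine ⟨fun h ↦ ?_, by rintro ⟨rfl, rfl, rfl⟩; rfl⟩
  have hmem (x : α) : x = a ∨ x = b ∨ x = c ↔ x = a' ∨ x = b' ∨ x = c' := by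
    simpa using Finset.ext_iff.mp h x
  grind [hmem a, hmem b, hmem c, hmem a', hmem b', hmem c']

lemma image_range_three_eq_triple_iff {k : ℕ → α} {a b c : α} (h01 : k 0 < k 1)
    (h12 : k 1 < k 2) (hab : a < b) (hbc : b < c) :
    (range 3).image k = {a, b, c} ↔ k 0 = a ∧ k 1 = b ∧ k 2 = c := by
  have himage : (range 3).image k = {k 0, k 1, k 2} := by
    rw [show range 3 = {0, 1, 2} from rfl]
    simp only [image_insert, image_singleton]
  rw [himage, triple_eq_triple_iff_of_lt h01 h12 hab hbc]

lemma pairwise_of_forall_lt {s : Set α} {r : α → α → Prop} [Std.Symm r]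
    (h : ∀ i ∈ s, ∀ j ∈ s, i < j → r i j) : s.Pairwise r := by
  intro i hi j hj hij
  obtain hlt | hgt := hij.lt_or_gt
  · exact h i hi j hj hlt
  · exact symm (h j hj i hi hgt)

end LinearOrder

lemma inv_add_inv_add_inv_le {a b c x y z : ℕ} (hx : 0 < x) (hy : 0 < y) (hz : 0 < z)
    (hxa : x ≤ a) (hyb : y ≤ b) (hzc : z ≤ c) :
    (a : ℚ)⁻¹ + (b : ℚ)⁻¹ + (c : ℚ)⁻¹ ≤ (x : ℚ)⁻¹ + (y : ℚ)⁻¹ + (z : ℚ)⁻¹ := by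
  gcongr

lemma le_triple_cases_of_coprime {a b c : ℕ} (ha : 1 < a) (hab : a < b) (hbc : b < c)
    (hab' : a.Coprime b) (hac' : a.Coprime c) (hne : ¬(a = 2 ∧ b = 3 ∧ c = 5)) :
    (3 ≤ a ∧ 4 ≤ b ∧ 5 ≤ c) ∨ (2 ≤ a ∧ 5 ≤ b ∧ 6 ≤ c) ∨ (2 ≤ a ∧ 3 ≤ b ∧ 7 ≤ c) := by
  obtain rfl | ha3 : a = 2 ∨ 3 ≤ a := by lia
  · have hb : Odd b := Nat.coprime_two_left.mp hab'
    have hc : Odd c := Nat.coprime_two_left.mp hac'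
    grind
  · lia

lemma inv_add_inv_add_inv_lt_one_of_coprime {a b c : ℕ} (ha : 1 < a) (hab : a < b) (hbc : b < c)
    (hab' : a.Coprime b) (hac' : a.Coprime c) (hne : ¬(a = 2 ∧ b = 3 ∧ c = 5)) :
    (a : ℚ)⁻¹ + (b : ℚ)⁻¹ + (c : ℚ)⁻¹ < 1 := by
  obtain ⟨h₁, h₂, h₃⟩ | ⟨h₁, h₂, h₃⟩ | ⟨h₁, h₂, h₃⟩ :=
      le_triple_cases_of_coprime ha hab hbc hab' hac' hne <;>
    exact (inv_add_inv_add_inv_le (by simp) (by simp) (by simp) h₁ h₂ h₃).trans_lt (by norm_num)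

lemma sum_inv_lt_one_of_card_eq_three {u : Finset ℕ} (hu : #u = 3) (hone : ∀ x ∈ u, 1 < x)
    (hcop : (u : Set ℕ).Pairwise Nat.Coprime) (hne : u ≠ {2, 3, 5}) :
    ∑ x ∈ u, (x : ℚ)⁻¹ < 1 := by
  obtain ⟨a, b, c, hab, hbc, rfl⟩ := exists_lt_lt_eq_triple_of_card_eq_three hu
  have hac := hab.trans hbc
  rw [sum_insert (by simp [hab.ne, hac.ne]), sum_pair hbc.ne, ← add_assoc]
  exact inv_add_inv_add_inv_lt_one_of_coprime (hone a (by simp)) hab hbc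
    (hcop (by simp) (by simp) hab.ne) (hcop (by simp) (by simp) hac.ne)
    (by rintro ⟨rfl, rfl, rfl⟩; exact hne rfl)

section Family

variable {ι : Type*} {s : Finset ι} {k : ι → ℕ}

lemma injOn_of_pairwise_coprime (hk : ∀ i ∈ s, 1 < k i)
    (hcop : (s : Set ι).Pairwise (Nat.Coprime on k)) : Set.InjOn k s := by
  intro i hi j hj hij
  by_contra hne
  have hself : (k i).Coprime (k i) := by simpa [onFun, ← hij] using hcop hi hj hne
  exact (hk i hi).ne' ((Nat.coprime_self _).mp hself)

lemma sum_inv_lt_card_sub_two_of_four_le_card (hs : 4 ≤ #s) (hk : ∀ i ∈ s, 1 < k i)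
    (hne : ∃ i ∈ s, k i ≠ 2) : ∑ i ∈ s, (k i : ℚ)⁻¹ < #s - 2 := by
  obtain ⟨j, hj, hj2⟩ := hne
  have hs' : (4 : ℚ) ≤ #s := mod_cast hs
  have hle (i) (hi : i ∈ s) : (k i : ℚ)⁻¹ ≤ 2⁻¹ := by
    gcongr
    exact_mod_cast hk i hi
  have hlt : (k j : ℚ)⁻¹ < 2⁻¹ := by
    gcongr
    exact_mod_cast lt_of_le_of_ne (hk j hj) hj2.symm
  calc ∑ i ∈ s, (k i : ℚ)⁻¹ < ∑ _i ∈ s, (2 : ℚ)⁻¹ := sum_lt_sum hle ⟨j, hj, hlt⟩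
    _ = #s / 2 := by rw [sum_const, nsmul_eq_mul, div_eq_mul_inv]
    _ ≤ #s - 2 := by linarith

lemma sum_inv_lt_card_sub_two (hs : 3 ≤ #s) (hk : ∀ i ∈ s, 1 < k i) (hne : ∃ i ∈ s, k i ≠ 2)
    (hcop : #s = 3 → (s : Set ι).Pairwise (Nat.Coprime on k))
    (h235 : ¬(#s = 3 ∧ s.image k = {2, 3, 5})) : ∑ i ∈ s, (k i : ℚ)⁻¹ < #s - 2 := by
  obtain hs3 | hs4 := hs.eq_or_lt'
  · have hinj := injOn_of_pairwise_coprime hk (hcop hs3)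
    have hsum : ∑ x ∈ s.image k, (x : ℚ)⁻¹ < 1 := by
      refine sum_inv_lt_one_of_card_eq_three ((card_image_of_injOn hinj).trans hs3)
        (by simpa using hk) ?_ fun h ↦ h235 ⟨hs3, h⟩
      rw [coe_image]
      exact hinj.pairwise_image.mpr (hcop hs3)
    rw [sum_image hinj] at hsum
    rw [hs3]
    norm_num [hsum]
  · exact sum_inv_lt_card_sub_two_of_four_le_card hs4 hk hne

lemma cast_sum_prod_div {K : Type*} [Field K] [CharZero K] (hk : ∀ i ∈ s, k i ≠ 0) :
    ((∑ i ∈ s, (((∏ j ∈ s, k j) / k i : ℕ) : ℤ) : ℤ) : K) =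
      (∏ j ∈ s, k j : ℕ) * ∑ i ∈ s, (k i : K)⁻¹ := by
  rw [Int.cast_sum, mul_sum]
  refine sum_congr rfl fun i hi ↦ ?_
  rw [Int.cast_natCast, Nat.cast_div (dvd_prod_of_mem k hi) (mod_cast hk i hi), div_eq_mul_inv]

lemma sum_prod_div_lt_mul_prod_iff (hk : ∀ i ∈ s, k i ≠ 0) (c : ℤ) :
    ∑ i ∈ s, (((∏ j ∈ s, k j) / k i : ℕ) : ℤ) < c * (∏ j ∈ s, k j : ℕ) ↔
      ∑ i ∈ s, (k i : ℚ)⁻¹ < c := by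
  have hpos : (0 : ℚ) < (∏ j ∈ s, k j : ℕ) :=
    mod_cast prod_pos fun i hi ↦ Nat.pos_of_ne_zero (hk i hi)
  rw [← Int.cast_lt (R := ℚ), cast_sum_prod_div hk, Int.cast_mul, Int.cast_natCast, mul_comm,
    mul_lt_mul_iff_left₀ hpos]

lemma two_mul_prod_sub_sum_prod_div_of_image_eq (hs : #s = 3) (himage : s.image k = {2, 3, 5}) :
    2 * ((∏ j ∈ s, k j : ℕ) : ℤ) - ∑ i ∈ s, (((∏ j ∈ s, k j) / k i : ℕ) : ℤ) = 29 := by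
  have hinj : Set.InjOn k s := card_image_iff.mp (by rw [himage, hs]; rfl)
  have hprod : ∏ j ∈ s, k j = 30 := by
    rw [← prod_image (f := fun x ↦ x) hinj, himage]
    rfl
  have hsum : ∑ i ∈ s, ((30 / k i : ℕ) : ℤ) = 31 := by
    rw [← sum_image (f := fun x ↦ ((30 / x : ℕ) : ℤ)) hinj, himage]
    rfl
  rw [hprod, hsum]
  rfl

end Family

theorem s_gt_one_unless_two_three_five_general {ι : Type*} (s : Finset ι) (hs : 3 ≤ #s)
    (k : ι → ℕ) (hk : ∀ i ∈ s, 1 < k i) (hne : ∃ i ∈ s, k i ≠ 2)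
    (hcop : #s = 3 → (s : Set ι).Pairwise (Nat.Coprime on k))
    (M : ℕ) (hM : M = ∏ i ∈ s, k i)
    (ρ : ℤ) (hρ : ρ = ((#s : ℤ) - 1) * M - ∑ i ∈ s, ((M / k i : ℕ) : ℤ)) :
    (¬(#s = 3 ∧ s.image k = {2, 3, 5}) → ((#s : ℤ) - 2) * M > ∑ i ∈ s, ((M / k i : ℕ) : ℤ)) ∧
    ((#s = 3 ∧ s.image k = {2, 3, 5}) → ρ = 29) := by
  subst hM hρ
  refine ⟨fun h235 ↦ ?_, fun ⟨hs3, himage⟩ ↦ ?_⟩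
  · rw [gt_iff_lt, sum_prod_div_lt_mul_prod_iff fun i hi ↦ Nat.ne_zero_of_lt (hk i hi)]
    exact_mod_cast sum_inv_lt_card_sub_two hs hk hne hcop h235
  · rw [← two_mul_prod_sub_sum_prod_div_of_image_eq hs3 himage, hs3]
    rfl

/-- Proposition 3.1(2): for pairwise coprime multiplicities `1 < k 0 < ⋯ < k (N-1)`
with `N ≥ 3`, setting `M = ∏ kᵢ`, `Mᵢ = M/kᵢ`, `ρ = (N-1)·M - ∑ Mᵢ`:
if not `N = 3` with `(k 0, k 1, k 2) = (2, 3, 5)` then `(N-2)·M > ∑ Mᵢ`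
(equivalently `ρ > M`); in the exceptional case one has `ρ = 29`. -/
theorem s_gt_one_unless_two_three_five
    (N : ℕ) (hN : 3 ≤ N) (k : ℕ → ℕ)
    (hk : ∀ i < N, 1 < k i)
    (hmono : ∀ i j, i < j → j < N → k i < k j)
    (hcop : ∀ i j, i < j → j < N → Nat.Coprime (k i) (k j))
    (M : ℕ) (hM : M = ∏ i ∈ Finset.range N, k i)
    (ρ : ℤ)
    (hρ : ρ = ((N : ℤ) - 1) * (M : ℤ) - ∑ i ∈ Finset.range N, ((M / k i : ℕ) : ℤ)) :
    (¬(N = 3 ∧ k 0 = 2 ∧ k 1 = 3 ∧ k 2 = 5) →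
      ((N : ℤ) - 2) * (M : ℤ) > ∑ i ∈ Finset.range N, ((M / k i : ℕ) : ℤ)) ∧
    ((N = 3 ∧ k 0 = 2 ∧ k 1 = 3 ∧ k 2 = 5) → ρ = 29) := by
  have h01 : k 0 < k 1 := hmono 0 1 (by lia) (by lia)
  have h12 : k 1 < k 2 := hmono 1 2 (by lia) (by lia)
  have hne : ∃ i ∈ range N, k i ≠ 2 :=
    ⟨1, mem_range.mpr (by lia), (lt_of_le_of_lt (hk 0 (by lia)) h01).ne'⟩
  have hpair : (range N : Set ℕ).Pairwise (Nat.Coprime on k) :=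
    pairwise_of_forall_lt fun i _ j hj hij ↦ hcop i j hij (by simpa using hj)
  have hiff : N = 3 ∧ (range N).image k = {2, 3, 5} ↔ N = 3 ∧ k 0 = 2 ∧ k 1 = 3 ∧ k 2 = 5 :=
    and_congr_right fun h ↦ by
      rw [h, image_range_three_eq_triple_iff h01 h12 (by simp) (by simp)]
  simpa [hiff] using s_gt_one_unless_two_three_five_general (range N) (by simpa)
    k (by simpa using hk) hne (fun _ ↦ hpair) M hM ρ (by simpa using hρ)
end

section
/- Let N ≥ 3 and let k_1, …, k_N be as in the context. Then ρ > 6N. -/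
/-!
Adjoining a multiplicity `q` to a family with product `P` replaces `ρ` by `q * ρ + (q - 1) * P`,
so once `ρ ≥ 0` every further multiplicity at least doubles `ρ`, and it suffices to bound `ρ` for
three multiplicities. Three distinct integers greater than `1` include one that is at least `4`;
the other two, `a` and `b`, have `P = a * b ≥ 6` and `ρ = a * b - a - b ≥ 1`, so adjoining the
large one gives `ρ ≥ 4 * 1 + 3 * 6 = 22 > 18`.
-/

open Finset

section Rho

variable {ι : Type*} {s : Finset ι} {k : ι → ℕ} {i j : ι}

/-- The integer `ρ = (N - 1) M - ∑ M / k i` attached to the multiplicities `k i`, `i ∈ s`, where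
`N = #s` and `M = ∏ k i`; the canonical divisor is `ρ` times the generator `λ`. The divisions are
taken in `ℕ`, where they are exact. -/
def rho (s : Finset ι) (k : ι → ℕ) : ℤ :=
  ((#s : ℤ) - 1) * ((∏ i ∈ s, k i : ℕ) : ℤ) - ∑ i ∈ s, (((∏ j ∈ s, k j) / k i : ℕ) : ℤ)

lemma rho_insert [DecidableEq ι] (hi : i ∉ s) (hki : 0 < k i) :
    rho (insert i s) k = k i * rho s k + (k i - 1) * ((∏ j ∈ s, k j : ℕ) : ℤ) := by
  have hsum : ∑ j ∈ s, ((k i * (∏ l ∈ s, k l) / k j : ℕ) : ℤ) =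
      k i * ∑ j ∈ s, (((∏ l ∈ s, k l) / k j : ℕ) : ℤ) := by
    rw [mul_sum]
    refine sum_congr rfl fun j hj ↦ ?_
    rw [Nat.mul_div_assoc _ (dvd_prod_of_mem k hj), Nat.cast_mul]
  rw [rho, rho, card_insert_of_notMem hi, prod_insert hi, sum_insert hi, hsum,
    Nat.mul_div_cancel_left _ hki]
  push_cast
  ring

lemma rho_pair [DecidableEq ι] (hij : i ≠ j) (hi : 0 < k i) (hj : 0 < k j) :
    rho {i, j} k = k i * k j - k i - k j := by
  rw [rho, card_pair hij, prod_pair hij, sum_pair hij, Nat.mul_div_cancel_left _ hi,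
    Nat.mul_div_cancel _ hj]
  push_cast
  ring

lemma two_mul_rho_le_rho_insert [DecidableEq ι] (hi : i ∉ s) (hki : 1 < k i)
    (hs : 0 ≤ rho s k) : 2 * rho s k ≤ rho (insert i s) k := by
  have hki' : (2 : ℤ) ≤ k i := by exact_mod_cast hki
  calc 2 * rho s k ≤ k i * rho s k := by gcongr
    _ ≤ k i * rho s k + (k i - 1) * ((∏ j ∈ s, k j : ℕ) : ℤ) :=
      le_add_of_nonneg_right (mul_nonneg (by linarith) (Nat.cast_nonneg _))
    _ = rho (insert i s) k := (rho_insert hi (by omega)).symm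

lemma six_le_mul_of_ne {a b : ℕ} (ha : 1 < a) (hb : 1 < b) (hab : a ≠ b) : 6 ≤ a * b := by
  obtain h | h := hab.lt_or_gt
  · exact Nat.mul_le_mul (show 2 ≤ a by omega) (show 3 ≤ b by omega)
  · exact Nat.mul_le_mul (show 3 ≤ a by omega) (show 2 ≤ b by omega)

lemma add_lt_mul_of_ne {a b : ℕ} (ha : 1 < a) (hb : 1 < b) (hab : a ≠ b) : a + b < a * b := by
  obtain h | h := hab.lt_or_gt <;> nlinarith

lemma six_le_prod_of_card_eq_two (hs : #s = 2) (hk : ∀ i ∈ s, 1 < k i)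
    (hinj : Set.InjOn k s) : 6 ≤ ∏ i ∈ s, k i := by
  classical
  obtain ⟨i, j, hij, rfl⟩ := card_eq_two.mp hs
  rw [prod_pair hij]
  exact six_le_mul_of_ne (hk i (by simp)) (hk j (by simp)) (hinj.ne (by simp) (by simp) hij)

lemma rho_pos_of_card_eq_two (hs : #s = 2) (hk : ∀ i ∈ s, 1 < k i)
    (hinj : Set.InjOn k s) : 0 < rho s k := by
  classical
  obtain ⟨i, j, hij, rfl⟩ := card_eq_two.mp hs
  have hi : 1 < k i := hk i (by simp)
  have hj : 1 < k j := hk j (by simp)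
  have hlt : (k i + k j : ℤ) < k i * k j := by
    exact_mod_cast add_lt_mul_of_ne hi hj (hinj.ne (by simp) (by simp) hij)
  rw [rho_pair hij (by omega) (by omega)]
  linarith

lemma exists_card_lt_of_injOn (hs : s.Nonempty) (hk : ∀ i ∈ s, 1 < k i)
    (hinj : Set.InjOn k s) : ∃ i ∈ s, #s < k i := by
  by_contra! hle
  have hcard : #s ≤ #(Ioc 1 #s) :=
    card_le_card_of_injOn k (fun i hi ↦ mem_coe.mpr (mem_Ioc.mpr ⟨hk i hi, hle i hi⟩)) hinj
  rw [Nat.card_Ioc] at hcard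
  have := hs.card_pos
  omega

lemma twenty_two_le_rho_of_card_eq_three (hs : #s = 3) (hk : ∀ i ∈ s, 1 < k i)
    (hinj : Set.InjOn k s) : 22 ≤ rho s k := by
  classical
  obtain ⟨i, hi, hlt⟩ := exists_card_lt_of_injOn (card_pos.mp (by omega)) hk hinj
  have hki : (4 : ℤ) ≤ k i := by omega
  have hcard : #(s.erase i) = 2 := by rw [card_erase_of_mem hi, hs]
  have hk' : ∀ j ∈ s.erase i, 1 < k j := fun j hj ↦ hk j (mem_of_mem_erase hj)
  have hinj' : Set.InjOn k (s.erase i) := hinj.mono (coe_subset.mpr (erase_subset i s))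
  have hrho : 1 ≤ rho (s.erase i) k := rho_pos_of_card_eq_two hcard hk' hinj'
  have hprod : (6 : ℤ) ≤ (∏ j ∈ s.erase i, k j : ℕ) := by
    exact_mod_cast six_le_prod_of_card_eq_two hcard hk' hinj'
  calc (22 : ℤ) = 4 * 1 + (4 - 1) * 6 := by norm_num
    _ ≤ k i * rho (s.erase i) k + (k i - 1) * (∏ j ∈ s.erase i, k j : ℕ) := by gcongr; linarith
    _ = rho (insert i (s.erase i)) k := (rho_insert (notMem_erase i s) (by omega)).symm
    _ = rho s k := by rw [insert_erase hi]

theorem rho_gt_six_N_general (hs : 3 ≤ #s) (hk : ∀ i ∈ s, 1 < k i) (hinj : Set.InjOn k s) :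
    6 * (#s : ℤ) < rho s k := by
  classical
  induction s using Finset.induction with
  | empty => simp at hs
  | insert i s hi ih =>
    have hcard : #(insert i s) = #s + 1 := card_insert_of_notMem hi
    obtain hs3 | hs3 : 3 ≤ #s ∨ #(insert i s) = 3 := by omega
    · have hrho : 6 * (#s : ℤ) < rho s k :=
        ih hs3 (fun j hj ↦ hk j (mem_insert_of_mem hj))
          (hinj.mono (coe_subset.mpr (subset_insert i s)))
      have hdouble : 2 * rho s k ≤ rho (insert i s) k :=
        two_mul_rho_le_rho_insert hi (hk i (mem_insert_self i s)) (by omega)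
      omega
    · have := twenty_two_le_rho_of_card_eq_three hs3 hk hinj
      omega

end Rho

/-- Proposition 3.1(4): if `N ≥ 3` then `ρ > 6N`. -/
theorem rho_gt_six_N
    (N : ℕ) (hN : 3 ≤ N) (k : ℕ → ℕ)
    (hk : ∀ i < N, 1 < k i)
    (hmono : ∀ i j, i < j → j < N → k i < k j)
    (hcop : ∀ i j, i < j → j < N → Nat.Coprime (k i) (k j))
    (M : ℕ) (hM : M = ∏ i ∈ Finset.range N, k i)
    (ρ : ℤ)
    (hρ : ρ = ((N : ℤ) - 1) * (M : ℤ) - ∑ i ∈ Finset.range N, ((M / k i : ℕ) : ℤ)) :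
    6 * (N : ℤ) < ρ := by
  have hinj : Set.InjOn k (range N) :=
    StrictMonoOn.injOn fun i _ j hj hij ↦ hmono i j hij (mem_range.mp hj)
  simpa [hρ, hM, rho] using rho_gt_six_N_general (s := range N) (by simpa) (by simpa) hinj
end

section
/- Let N ≥ 2 and let k_1, …, k_N be as in the context. Then M > 2^N · (N−1)!. -/
/-!
By coprimality at most one of the `k i` is even. Hence among the `n` smallest at least `n - 1` are
odd and exceed `1`, so the `n`-th smallest is at least `2 * n - 1`. As the smallest is at least `2`,
the product of all `N` is at least `2 * (3 * 5 * ⋯ * (2 * N - 1)) = 2 * (2 * N - 1)‼`, which exceeds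
`2 * (2 * N - 2)‼ = 2 ^ N * (N - 1)!`.
-/

open Finset
open scoped Nat

theorem doubleFactorial_lt_doubleFactorial_succ : ∀ {n : ℕ}, 0 < n → n‼ < (n + 1)‼
  | 1, _ => by decide
  | 2, _ => by decide
  | n + 3, _ =>
    Nat.mul_lt_mul'' (Nat.lt_succ_self (n + 3))
      (doubleFactorial_lt_doubleFactorial_succ n.succ_pos)

theorem card_le_of_subset_Ioc_of_odd {s : Finset ℕ} {m : ℕ} (hs : s ⊆ Ioc 1 m)
    (hodd : ∀ x ∈ s, Odd x) : #s ≤ (m - 1) / 2 := by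
  have hmaps : Set.MapsTo (· / 2) (s : Set ℕ) (Ioc 0 ((m - 1) / 2) : Finset ℕ) := by
    intro x hx
    obtain ⟨hx_gt, hx_le⟩ := mem_Ioc.mp (hs hx)
    obtain ⟨y, rfl⟩ := hodd x hx
    simp only [coe_Ioc, Set.mem_Ioc]
    omega
  have hinj : Set.InjOn (· / 2) (s : Set ℕ) := by
    intro x hx y hy hxy
    obtain ⟨a, rfl⟩ := hodd x hx
    obtain ⟨b, rfl⟩ := hodd y hy
    dsimp only at hxy
    omega
  simpa using card_le_card_of_injOn _ hmaps hinj

theorem two_mul_card_le_succ_of_card_filter_even_le_one {s : Finset ℕ} {m : ℕ}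
    (hs : s ⊆ Ioc 1 m) (heven : #{x ∈ s | Even x} ≤ 1) : 2 * #s ≤ m + 1 := by
  obtain rfl | ⟨x, hx⟩ := s.eq_empty_or_nonempty
  · simp
  have hm : 1 < m := (mem_Ioc.mp (hs hx)).1.trans_le (mem_Ioc.mp (hs hx)).2
  have hodd : #{x ∈ s | ¬Even x} ≤ (m - 1) / 2 :=
    card_le_of_subset_Ioc_of_odd ((filter_subset _ s).trans hs)
      fun x hx ↦ Nat.not_even_iff_odd.mp (mem_filter.mp hx).2
  have hsplit := card_filter_add_card_filter_not (s := s) (Even ·)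
  omega

theorem two_mul_doubleFactorial_le_prod {s : Finset ℕ} (hs : s.Nonempty)
    (hgt : ∀ x ∈ s, 1 < x) (heven : #{x ∈ s | Even x} ≤ 1) :
    2 * (2 * #s - 1)‼ ≤ ∏ x ∈ s, x := by
  induction s using Finset.induction_on_max with
  | empty => exact absurd hs not_nonempty_empty
  | insert a s hmax ih =>
    have ha : a ∉ s := fun h ↦ (hmax a h).false
    obtain rfl | hne := s.eq_empty_or_nonempty
    · simpa [Nat.succ_le_iff] using hgt
    have hsub : insert a s ⊆ Ioc 1 a := fun x hx ↦
      mem_Ioc.mpr ⟨hgt x hx, (mem_insert.mp hx).elim le_of_eq fun h ↦ (hmax x h).le⟩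
    have hlast : 2 * #s + 1 ≤ a := by
      have hcard := two_mul_card_le_succ_of_card_filter_even_le_one hsub heven
      rw [card_insert_of_notMem ha] at hcard
      omega
    have hprev : 2 * (2 * #s - 1)‼ ≤ ∏ x ∈ s, x :=
      ih hne (fun x hx ↦ hgt x (mem_insert_of_mem hx))
        ((card_le_card (filter_subset_filter _ (subset_insert a s))).trans heven)
    calc 2 * (2 * #(insert a s) - 1)‼
        = 2 * (2 * #s + 1)‼ := by rw [card_insert_of_notMem ha]; rfl
      _ = (2 * #s + 1) * (2 * (2 * #s - 1)‼) := by
        rw [Nat.doubleFactorial_add_one, mul_left_comm]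
      _ ≤ a * ∏ x ∈ s, x := Nat.mul_le_mul hlast hprev
      _ = ∏ x ∈ insert a s, x := by rw [prod_insert ha]

theorem card_filter_even_le_one_of_pairwise_coprime {ι : Type*} {s : Finset ι} {k : ι → ℕ}
    (hcop : (s : Set ι).Pairwise fun i j ↦ (k i).Coprime (k j)) : #{i ∈ s | Even (k i)} ≤ 1 := by
  refine card_le_one.mpr fun i hi j hj ↦ ?_
  obtain ⟨his, hi_even⟩ := mem_filter.mp hi
  obtain ⟨hjs, hj_even⟩ := mem_filter.mp hj
  by_contra hij
  exact Nat.not_coprime_of_dvd_of_dvd one_lt_two hi_even.two_dvd hj_even.two_dvd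
    (hcop his hjs hij)

theorem M_gt_two_pow_factorial_general {ι : Type*} {s : Finset ι} {k : ι → ℕ} (hs : 2 ≤ #s)
    (hgt : ∀ i ∈ s, 1 < k i) (hinj : Set.InjOn k s) (heven : #{i ∈ s | Even (k i)} ≤ 1) :
    2 ^ #s * (#s - 1)! < ∏ i ∈ s, k i := by
  have hcard : #(s.image k) = #s := card_image_of_injOn hinj
  have hne : (s.image k).Nonempty := card_pos.mp (by omega)
  have heven_image : #{x ∈ s.image k | Even x} ≤ 1 := by
    rw [filter_image]
    exact card_image_le.trans heven
  calc 2 ^ #s * (#s - 1)!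
      = 2 * (2 * (#s - 1))‼ := by
        rw [Nat.doubleFactorial_two_mul, ← mul_assoc, mul_pow_sub_one (by omega)]
    _ < 2 * (2 * (#s - 1) + 1)‼ := by
        gcongr
        exact doubleFactorial_lt_doubleFactorial_succ (by omega)
    _ = 2 * (2 * #(s.image k) - 1)‼ := by
        rw [hcard, show 2 * (#s - 1) + 1 = 2 * #s - 1 by omega]
    _ ≤ ∏ x ∈ s.image k, x :=
        two_mul_doubleFactorial_le_prod hne (forall_mem_image.mpr hgt) heven_image
    _ = ∏ i ∈ s, k i := prod_image hinj

/-- For pairwise coprime integers `1 < k 0 < ⋯ < k (N-1)` with `N ≥ 2`,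
the product `M = ∏ kᵢ` satisfies `M > 2^N · (N-1)!`. -/
theorem M_gt_two_pow_factorial
    (N : ℕ) (hN : 2 ≤ N) (k : ℕ → ℕ)
    (hk : ∀ i < N, 1 < k i)
    (hmono : ∀ i j, i < j → j < N → k i < k j)
    (hcop : ∀ i j, i < j → j < N → Nat.Coprime (k i) (k j))
    (M : ℕ) (hM : M = ∏ i ∈ Finset.range N, k i) :
    2 ^ N * Nat.factorial (N - 1) < M := by
  have hstrict : StrictMonoOn k (range N) := fun i _ j hj hij ↦ hmono i j hij (mem_range.mp hj)
  have hpair : (range N : Set ℕ).Pairwise fun i j ↦ (k i).Coprime (k j) := fun i hi j hj hij ↦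
    hij.lt_or_gt.elim (hcop i j · (mem_range.mp hj)) fun h ↦ (hcop j i h (mem_range.mp hi)).symm
  simpa [hM] using M_gt_two_pow_factorial_general (s := range N) (by simpa using hN)
    (fun i hi ↦ hk i (mem_range.mp hi)) hstrict.injOn
    (card_filter_even_le_one_of_pairwise_coprime hpair)
end

section
/- Let N ≥ 2 and let k_1, …, k_N be as in the context. Then, as real numbers, M > 2^N · (N−1)^((N−1)/2), where the exponent (N−1)/2 is the real number (N−1)/2 and the power is a real power. -/
/-!
Pairwise coprime integers include at most one even number. Remove one of the `k i`, the even one if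
there is one: it is at least `2`, and the other `n = N - 1` are distinct odd numbers `≥ 3`, so their
product is at least `3·5⋯(2n+1)`. Pairing the factors `2i + 3` and `2j + 3` with `i + j = n - 1`,
whose product is at least `6n + 3`, bounds the square of that product below by `(6n + 3) ^ n`.
Hence `M ^ 2 ≥ 4 (6n + 3) ^ n > 4 (4n) ^ n`, the square of `2 ^ N * n ^ (n / 2)`.
-/

section OrderedMonoid

variable {R : Type*} [CommMonoid R] [Preorder R] [IsOrderedMonoid R] {f : ℕ → R}

theorem prod_range_card_le_prod (hf : Monotone f) (s : Finset ℕ) :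
    ∏ i ∈ Finset.range s.card, f i ≤ ∏ i ∈ s, f i := by
  induction s using Finset.induction_on_max with
  | empty => simp
  | insert a s hlt ih =>
    have ha : a ∉ s := fun h => (hlt a h).false
    have hcard : s.card ≤ a := by
      simpa using Finset.card_le_card fun x hx => Finset.mem_range.2 (hlt x hx)
    rw [Finset.card_insert_of_notMem ha, Finset.prod_range_succ_comm, Finset.prod_insert ha]
    exact mul_le_mul' (hf hcard) ih

theorem prod_range_card_le_prod_comp {ι : Type*} {s : Finset ι} {g : ι → ℕ} (hf : Monotone f)
    (hg : Set.InjOn g s) : ∏ i ∈ Finset.range s.card, f i ≤ ∏ i ∈ s, f (g i) := by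
  classical
  simpa only [Finset.card_image_of_injOn hg, Finset.prod_image hg] using
    prod_range_card_le_prod hf (s.image g)

end OrderedMonoid

theorem pow_le_sq_prod_range_two_mul_add_three (n : ℕ) :
    (6 * n + 3) ^ n ≤ (∏ i ∈ Finset.range n, (2 * i + 3)) ^ 2 := by
  have hpair : ∀ i ∈ Finset.range n, 6 * n + 3 ≤ (2 * i + 3) * (2 * (n - 1 - i) + 3) := by
    intro i hi
    obtain ⟨j, rfl⟩ := Nat.exists_eq_add_of_lt (Finset.mem_range.1 hi)
    rw [show i + j + 1 - 1 - i = j by omega]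
    nlinarith [Nat.zero_le (i * j)]
  calc (6 * n + 3) ^ n = ∏ _i ∈ Finset.range n, (6 * n + 3) := by simp
    _ ≤ ∏ i ∈ Finset.range n, (2 * i + 3) * (2 * (n - 1 - i) + 3) := Finset.prod_le_prod' hpair
    _ = (∏ i ∈ Finset.range n, (2 * i + 3)) ^ 2 := by
      rw [Finset.prod_mul_distrib, Finset.prod_range_reflect (fun i => 2 * i + 3) n, sq]

theorem exists_mem_forall_ne_of_pairwise_or {ι : Type*} {s : Set ι} {p : ι → Prop}
    (hs : s.Nonempty) (hp : s.Pairwise fun i j => p i ∨ p j) :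
    ∃ i ∈ s, ∀ j ∈ s, j ≠ i → p j := by
  by_cases h : ∃ i ∈ s, ¬p i
  · obtain ⟨i, hi, hpi⟩ := h
    exact ⟨i, hi, fun j hj hne => (hp hj hi hne).resolve_right hpi⟩
  · push Not at h
    obtain ⟨i, hi⟩ := hs
    exact ⟨i, hi, fun j hj _ => h j hj⟩

theorem odd_or_odd_of_coprime {m n : ℕ} (h : m.Coprime n) : Odd m ∨ Odd n := by
  by_contra! heven
  simp only [Nat.not_odd_iff_even, even_iff_two_dvd] at heven
  exact Nat.not_coprime_of_dvd_of_dvd one_lt_two heven.1 heven.2 h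

section DistinctFactors

variable {ι : Type*} {s : Finset ι} {k : ι → ℕ}

theorem prod_range_two_mul_add_three_le_prod (hk : ∀ i ∈ s, 1 < k i) (hinj : Set.InjOn k s)
    (hodd : ∀ i ∈ s, Odd (k i)) :
    ∏ i ∈ Finset.range s.card, (2 * i + 3) ≤ ∏ i ∈ s, k i := by
  have hk_eq : ∀ i ∈ s, 2 * ((k i - 3) / 2) + 3 = k i := by
    intro i hi
    obtain ⟨m, hm⟩ := hodd i hi
    have := hk i hi
    omega
  have hinj_half : Set.InjOn (fun i => (k i - 3) / 2) s := by
    intro i hi j hj (hij : (k i - 3) / 2 = (k j - 3) / 2)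
    exact hinj hi hj (by rw [← hk_eq i hi, ← hk_eq j hj, hij])
  have hmono : Monotone fun i : ℕ => 2 * i + 3 := fun i j hij => by dsimp only; omega
  exact (prod_range_card_le_prod_comp hmono hinj_half).trans_eq (Finset.prod_congr rfl hk_eq)

theorem two_mul_prod_range_le_prod {n : ℕ} (hs : s.card = n + 1) (hk : ∀ i ∈ s, 1 < k i)
    (hinj : Set.InjOn k s) (hodd : (s : Set ι).Pairwise fun i j => Odd (k i) ∨ Odd (k j)) :
    2 * ∏ i ∈ Finset.range n, (2 * i + 3) ≤ ∏ i ∈ s, k i := by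
  classical
  have hne : s.Nonempty := Finset.card_pos.1 (by omega)
  obtain ⟨e, he, hodd_ne⟩ := exists_mem_forall_ne_of_pairwise_or hne.to_set hodd
  have hsub : s.erase e ⊆ s := s.erase_subset e
  have hrest : ∏ i ∈ Finset.range n, (2 * i + 3) ≤ ∏ i ∈ s.erase e, k i := by
    rw [← Nat.add_sub_cancel n 1, ← hs, ← Finset.card_erase_of_mem he]
    exact prod_range_two_mul_add_three_le_prod (fun i hi => hk i (hsub hi))
      (hinj.mono (Finset.coe_subset.2 hsub))
      fun i hi => hodd_ne i (hsub hi) (Finset.ne_of_mem_erase hi)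
  rw [← Finset.mul_prod_erase s k he]
  exact Nat.mul_le_mul (hk e he) hrest

theorem four_mul_pow_lt_sq_prod {n : ℕ} (hn : n ≠ 0) (hs : s.card = n + 1)
    (hk : ∀ i ∈ s, 1 < k i) (hinj : Set.InjOn k s)
    (hodd : (s : Set ι).Pairwise fun i j => Odd (k i) ∨ Odd (k j)) :
    4 * (4 * n) ^ n < (∏ i ∈ s, k i) ^ 2 :=
  calc 4 * (4 * n) ^ n < 4 * (6 * n + 3) ^ n := by gcongr; omega
    _ ≤ 4 * (∏ i ∈ Finset.range n, (2 * i + 3)) ^ 2 :=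
      Nat.mul_le_mul_left 4 (pow_le_sq_prod_range_two_mul_add_three n)
    _ = (2 * ∏ i ∈ Finset.range n, (2 * i + 3)) ^ 2 := by ring
    _ ≤ (∏ i ∈ s, k i) ^ 2 :=
      Nat.pow_le_pow_left (two_mul_prod_range_le_prod hs hk hinj hodd) 2

end DistinctFactors

theorem sq_two_pow_succ_mul_rpow_half {x : ℝ} (hx : 0 ≤ x) (n : ℕ) :
    (2 ^ (n + 1) * x ^ ((n : ℝ) / 2)) ^ 2 = 4 * (4 * x) ^ n := by
  rw [Real.rpow_div_two_eq_sqrt _ hx, Real.rpow_natCast]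
  calc (2 ^ (n + 1) * √x ^ n) ^ 2 = (2 ^ 2) ^ (n + 1) * (√x ^ 2) ^ n := by
        rw [mul_pow, pow_right_comm 2, pow_right_comm √x]
    _ = 4 ^ (n + 1) * x ^ n := by rw [Real.sq_sqrt hx]; norm_num
    _ = 4 * (4 * x) ^ n := by ring

theorem M_gt_two_pow_rpow_general {ι : Type*} {s : Finset ι} (hs : 2 ≤ s.card) {k : ι → ℕ}
    (hk : ∀ i ∈ s, 1 < k i) (hinj : Set.InjOn k s)
    (hodd : (s : Set ι).Pairwise fun i j => Odd (k i) ∨ Odd (k j)) :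
    (2 : ℝ) ^ s.card * ((s.card : ℝ) - 1) ^ (((s.card : ℝ) - 1) / 2) <
      ((∏ i ∈ s, k i : ℕ) : ℝ) := by
  obtain ⟨n, hn⟩ : ∃ n, s.card = n + 1 := Nat.exists_eq_succ_of_ne_zero (by omega)
  have hsq := four_mul_pow_lt_sq_prod (by omega) hn hk hinj hodd
  rw [hn, Nat.cast_succ, add_sub_cancel_right]
  refine lt_of_pow_lt_pow_left₀ 2 (Nat.cast_nonneg _) ?_
  rw [sq_two_pow_succ_mul_rpow_half n.cast_nonneg]
  exact_mod_cast hsq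

/-- For pairwise coprime integers `1 < k 0 < ⋯ < k (N-1)` with `N ≥ 2`,
as real numbers `M > 2^N · (N-1)^((N-1)/2)` (real power). -/
theorem M_gt_two_pow_rpow
    (N : ℕ) (hN : 2 ≤ N) (k : ℕ → ℕ)
    (hk : ∀ i < N, 1 < k i)
    (hmono : ∀ i j, i < j → j < N → k i < k j)
    (hcop : ∀ i j, i < j → j < N → Nat.Coprime (k i) (k j))
    (M : ℕ) (hM : M = ∏ i ∈ Finset.range N, k i) :
    (2 : ℝ) ^ N * ((N : ℝ) - 1) ^ (((N : ℝ) - 1) / 2) < (M : ℝ) := by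
  have hinj : Set.InjOn k (Finset.range N) :=
    StrictMonoOn.injOn fun i _ j hj hij => hmono i j hij (Finset.mem_range.1 hj)
  have hodd : (Finset.range N : Set ℕ).Pairwise fun i j => Odd (k i) ∨ Odd (k j) := by
    intro i hi j hj hij
    rcases hij.lt_or_gt with hlt | hgt
    · exact odd_or_odd_of_coprime (hcop i j hlt (Finset.mem_range.1 hj))
    · exact (odd_or_odd_of_coprime (hcop j i hgt (Finset.mem_range.1 hi))).symm
  simpa [hM] using M_gt_two_pow_rpow_general (by simpa using hN) (by simpa using hk) hinj hodd
end
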